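/- (Theorem 4.1(ii), chamber C₁₃₂.) Uniformly over all λ ∈ C⁺ and all X ∈ a with x1 ≥ x3 ≥ x2, one has E_k(X,λ) ≍ e^{⟨λ,X⁺⟩} / [ (1+α_λ α_{X⁺})^{k} (1+β_λ β_{X⁺})^{k+1} (1+γ_λ γ_{X⁺})^{k} ]. -/

import Mathlib

open Real MeasureTheory

/-- The rank-one Dunkl kernel `E_k^{rk1}(x,v)`. -/
noncomputable def Erk1 (k x v : ℝ) : ℝ :=
  (Real.Gamma (k + 1/2) / (Real.sqrt Real.pi * Real.Gamma k)) *
    ∫ z in (-1 : ℝ)..1, Real.exp (z * x * v) * (1 - z) ^ (k - 1) * (1 + z) ^ k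

/-- The normalized modified Bessel function `𝒥_a(y)`, for `a > -1/2`. -/
noncomputable def besselJ (a y : ℝ) : ℝ :=
  (Real.Gamma (a + 1) / (Real.sqrt Real.pi * Real.Gamma (a + 1/2))) *
    ∫ z in (-1 : ℝ)..1, Real.exp (y * z) * (1 - z ^ 2) ^ (a - 1/2)

/-- `W_k(λ,ν)`. -/
noncomputable def Wk (k l1 l2 l3 n1 n2 : ℝ) : ℝ :=
  ((l1 - n1) * (l1 - n2) * (n1 - l2) * (l2 - n2) * (n1 - l3) * (n2 - l3)) ^ (k - 1)

/-- `V(λ) = (λ1-λ2)(λ1-λ3)(λ2-λ3)`. -/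
def Vlam (l1 l2 l3 : ℝ) : ℝ := (l1 - l2) * (l1 - l3) * (l2 - l3)

/-- The `A₂` Dunkl kernel `E_k(X,λ)`, defined via the rank-one kernel formula. -/
noncomputable def EkA2 (k x1 x2 x3 l1 l2 l3 : ℝ) : ℝ :=
  (3 * Real.Gamma (3 * k) / (Vlam l1 l2 l3 ^ (2 * k) * Real.Gamma k ^ 2)) *
    ∫ n2 in l3..l2, ∫ n1 in l2..l1,
      ((n1 - l2) * (l1 - n2) * Erk1 k ((x1 - x2) / 2) (n1 - n2)
        + (l1 - n1) * (l2 - n2) * Erk1 k (-(x1 - x2) / 2) (n1 - n2))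
      * ((n1 - l3) * (n2 - l3)) * Real.exp ((x1 + x2 - 2 * x3) * (n1 + n2) / 2)
      * Wk k l1 l2 l3 n1 n2


theorem aux_dom {f g : ℝ → ℝ} {A B : ℝ} (hAB : A < B) (hf : Measurable f)
    (hg : IntervalIntegrable g volume A B) (h : ∀ x ∈ Set.Ioo A B, 0 ≤ f x ∧ f x ≤ g x) :
    IntervalIntegrable f volume A B := by
  rw [intervalIntegrable_iff_integrableOn_Ioo_of_le hAB.le] at hg ⊢
  refine Integrable.mono' hg hf.aestronglyMeasurable ?_
  refine (ae_restrict_iff' measurableSet_Ioo).2 (Filter.Eventually.of_forall fun x hx => ?_)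
  rw [Real.norm_eq_abs, abs_of_nonneg (h x hx).1]
  exact (h x hx).2

theorem aux_int (m n c A B : ℝ) (hm : 0 < m) (hn : 0 < n) (hAB : A < B) :
    IntervalIntegrable (fun x => (B - x) ^ (m - 1) * (x - A) ^ (n - 1) * Real.exp (c * x))
      volume A B := by
  have key1 : IntervalIntegrable (fun x => (x - A) ^ (n - 1)) volume A ((A + B) / 2) := by
    have := (intervalIntegral.intervalIntegrable_rpow' (a := 0) (b := (B - A) / 2)
      (r := n - 1) (by linarith)).comp_sub_right A
    convert this using 1 <;> ring
  have key2 : IntervalIntegrable (fun x => (B - x) ^ (m - 1)) volume ((A + B) / 2) B := by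
    have := (intervalIntegral.intervalIntegrable_rpow' (a := (B - A) / 2) (b := 0)
      (r := m - 1) (by linarith)).comp_sub_left B
    convert this using 1 <;> ring
  have h1 : IntervalIntegrable (fun x => (B - x) ^ (m - 1) * (x - A) ^ (n - 1) * Real.exp (c * x))
      volume A ((A + B) / 2) := by
    have := key1.mul_continuousOn (g := fun x => (B - x) ^ (m - 1) * Real.exp (c * x)) (by
      apply ContinuousOn.mul _ (by fun_prop)
      apply ContinuousOn.rpow_const (by fun_prop)
      intro x hx
      rw [Set.uIcc_of_le (by linarith)] at hx
      left
      have := hx.2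
      intro h0
      linarith)
    refine this.congr ?_
    intro x _
    ring
  have h2 : IntervalIntegrable (fun x => (B - x) ^ (m - 1) * (x - A) ^ (n - 1) * Real.exp (c * x))
      volume ((A + B) / 2) B := by
    have := key2.mul_continuousOn (g := fun x => (x - A) ^ (n - 1) * Real.exp (c * x)) (by
      apply ContinuousOn.mul _ (by fun_prop)
      apply ContinuousOn.rpow_const (by fun_prop)
      intro x hx
      rw [Set.uIcc_of_le (by linarith)] at hx
      left
      have := hx.1
      intro h0
      linarith)
    refine this.congr ?_
    intro x _
    ring
  exact h1.trans h2

theorem aux_int01 (m n y : ℝ) (hm : 0 < m) (hn : 0 < n) :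
    IntervalIntegrable (fun u : ℝ => u ^ (m - 1) * (1 - u) ^ (n - 1) * Real.exp (-(y * u)))
      volume 0 1 := by
  refine (aux_int n m (-y) 0 1 hn hm one_pos).congr ?_
  intro x _
  simp only [sub_zero, neg_mul]
  ring

theorem aux_half (r u : ℝ) (h0 : 1 / 2 ≤ u) (h1 : u ≤ 1) :
    min 1 ((1 / 2 : ℝ) ^ r) ≤ u ^ r ∧ u ^ r ≤ 1 + (1 / 2 : ℝ) ^ r := by
  have hp : (0 : ℝ) < (1 / 2 : ℝ) ^ r := by positivity
  rcases le_total 0 r with hr | hr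
  · constructor
    · exact (min_le_right _ _).trans (Real.rpow_le_rpow (by norm_num) h0 hr)
    · have := Real.rpow_le_one (by linarith) h1 hr
      linarith
  · constructor
    · exact (min_le_left _ _).trans
        (Real.one_le_rpow_of_pos_of_le_one_of_nonpos (by linarith) h1 hr)
    · have := Real.rpow_le_rpow_of_nonpos (by norm_num : (0 : ℝ) < 1 / 2) h0 hr
      linarith

theorem aux_expbd (m : ℝ) (hm : 0 < m) (y : ℝ) (hy : 0 ≤ y) :
    Real.exp (-(y / 2)) ≤ (1 + 2 * m) ^ m * (1 + y) ^ (-m) := by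
  have h1 : 1 + y ≤ (1 + 2 * m) * Real.exp (y / (2 * m)) := by
    have h2 := Real.add_one_le_exp (y / (2 * m))
    have h3 : (1 + 2 * m) * (y / (2 * m) + 1) ≤ (1 + 2 * m) * Real.exp (y / (2 * m)) := by
      gcongr
    have h4 : (1 + 2 * m) * (y / (2 * m) + 1) = 1 + y + y / (2 * m) + 2 * m := by
      field_simp
      ring
    have h5 : 0 ≤ y / (2 * m) := by positivity
    linarith
  have h2 : (1 + y) ^ m ≤ (1 + 2 * m) ^ m * Real.exp (y / 2) := by
    calc (1 + y) ^ m ≤ ((1 + 2 * m) * Real.exp (y / (2 * m))) ^ m :=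
          Real.rpow_le_rpow (by linarith) h1 hm.le
      _ = _ := by
          rw [Real.mul_rpow (by positivity) (by positivity), ← Real.exp_mul]
          congr 2
          field_simp
  rw [Real.rpow_neg (by linarith), Real.exp_neg]
  have h3 : 0 < (1 + y) ^ m := by positivity
  rw [← div_eq_mul_inv, le_div_iff₀ h3, inv_mul_le_iff₀ (by positivity)]
  linarith

theorem aux_upper01 (m n : ℝ) (hm : 0 < m) (hn : 0 < n) :
    ∃ C : ℝ, 0 < C ∧ ∀ y : ℝ, 0 ≤ y →
      (∫ u in (0 : ℝ)..1, u ^ (m - 1) * (1 - u) ^ (n - 1) * Real.exp (-(y * u)))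
        ≤ C * (1 + y) ^ (-m) := by
  set K2 : ℝ := (1 + (1 / 2 : ℝ) ^ (n - 1)) * Real.exp 1 with hK2
  set K1 : ℝ := (1 + 2 * m) ^ m with hK1
  have hK1p : 0 < K1 := by positivity
  have hK2p : 0 < K2 := by positivity
  set I0 : ℝ := ∫ u in (0 : ℝ)..1, u ^ (m - 1) * (1 - u) ^ (n - 1) with hI0
  have hint0 : IntervalIntegrable (fun u : ℝ => u ^ (m - 1) * (1 - u) ^ (n - 1)) volume 0 1 := by
    refine (aux_int01 m n 0 hm hn).congr ?_
    intro x _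
    simp
  have hI0n : 0 ≤ I0 := by
    apply intervalIntegral.integral_nonneg (by norm_num)
    intro u hu
    have := hu.1
    have := hu.2
    have : 0 ≤ 1 - u := by linarith
    positivity
  have hG := Real.Gamma_pos_of_pos hm
  refine ⟨K2 * Real.Gamma m + K1 * I0, by positivity, fun y hy => ?_⟩
  have hi1 := aux_int01 m 1 (1 + y) hm one_pos
  simp only [sub_self, Real.rpow_zero, mul_one] at hi1
  have hgam : (∫ u in (0 : ℝ)..1, u ^ (m - 1) * Real.exp (-((1 + y) * u)))
      ≤ Real.Gamma m * (1 + y) ^ (-m) := by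
    have e := Real.integral_rpow_mul_exp_neg_mul_Ioi hm (by linarith : 0 < 1 + y)
    have e2 : (1 / (1 + y)) ^ m * Real.Gamma m = Real.Gamma m * (1 + y) ^ (-m) := by
      rw [Real.rpow_neg (by linarith), one_div, Real.inv_rpow (by linarith)]
      ring
    rw [← e2, ← e, intervalIntegral.integral_of_le (by norm_num)]
    apply setIntegral_mono_set
    · have := integrableOn_rpow_mul_exp_neg_mul_rpow (p := 1) (s := m - 1) (b := 1 + y)
        (by linarith) one_pos (by linarith)
      refine this.congr_fun ?_ measurableSet_Ioi
      intro x _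
      simp only [Real.rpow_one, neg_mul]
    · refine (ae_restrict_iff' measurableSet_Ioi).2 (Filter.Eventually.of_forall fun x hx => ?_)
      have : 0 < x := hx
      simp only [Pi.zero_apply]
      positivity
    · exact (Set.Ioc_subset_Ioi_self).eventuallyLE
  have hmono : (∫ u in (0 : ℝ)..1, u ^ (m - 1) * (1 - u) ^ (n - 1) * Real.exp (-(y * u)))
      ≤ ∫ u in (0 : ℝ)..1, (K2 * (u ^ (m - 1) * Real.exp (-((1 + y) * u)))
        + K1 * (1 + y) ^ (-m) * (u ^ (m - 1) * (1 - u) ^ (n - 1))) := by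
    apply intervalIntegral.integral_mono_on_of_le_Ioo (by norm_num) (aux_int01 m n y hm hn)
      ((hi1.const_mul _).add (hint0.const_mul _))
    intro u hu
    obtain ⟨hu0, hu1⟩ := hu
    have h1u : 0 < 1 - u := by linarith
    have hA : 0 < u ^ (m - 1) := by positivity
    have hB : 0 < (1 - u) ^ (n - 1) := by positivity
    have hY : 0 < (1 + y) ^ (-m) := by positivity
    rcases le_total u (1 / 2) with h | h
    · have h3 := (aux_half (n - 1) (1 - u) (by linarith) (by linarith)).2
      have h4 : Real.exp (-(y * u)) ≤ Real.exp 1 * Real.exp (-((1 + y) * u)) := by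
        rw [← Real.exp_add]
        apply Real.exp_le_exp.2
        nlinarith
      have : u ^ (m - 1) * (1 - u) ^ (n - 1) * Real.exp (-(y * u)) ≤
          u ^ (m - 1) * (1 + (1 / 2 : ℝ) ^ (n - 1)) * (Real.exp 1 * Real.exp (-((1 + y) * u))) := by
        gcongr
      have h5 : 0 ≤ K1 * (1 + y) ^ (-m) * (u ^ (m - 1) * (1 - u) ^ (n - 1)) := by positivity
      rw [hK2]
      nlinarith
    · have h4 : Real.exp (-(y * u)) ≤ K1 * (1 + y) ^ (-m) := by
        refine le_trans ?_ (aux_expbd m hm y hy)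
        apply Real.exp_le_exp.2
        nlinarith
      have : u ^ (m - 1) * (1 - u) ^ (n - 1) * Real.exp (-(y * u)) ≤
          u ^ (m - 1) * (1 - u) ^ (n - 1) * (K1 * (1 + y) ^ (-m)) := by
        gcongr
      have h5 : 0 ≤ K2 * (u ^ (m - 1) * Real.exp (-((1 + y) * u))) := by positivity
      linarith
  refine hmono.trans ?_
  rw [intervalIntegral.integral_add (hi1.const_mul _) (hint0.const_mul _),
    intervalIntegral.integral_const_mul, intervalIntegral.integral_const_mul]
  calc _ ≤ K2 * (Real.Gamma m * (1 + y) ^ (-m)) + K1 * (1 + y) ^ (-m) * I0 := by gcongr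
    _ = _ := by ring

theorem aux_lower01 (m n : ℝ) (hm : 0 < m) (hn : 0 < n) :
    ∃ c : ℝ, 0 < c ∧ ∀ y : ℝ, 0 ≤ y →
      c * (1 + y) ^ (-m) ≤
      ∫ u in (0 : ℝ)..1, u ^ (m - 1) * (1 - u) ^ (n - 1) * Real.exp (-(y * u)) := by
  set K : ℝ := min 1 ((1 / 2 : ℝ) ^ (n - 1)) * Real.exp (-1) with hK
  have hKp : 0 < K := by positivity
  refine ⟨K * (2 ^ (-m) / m), by positivity, fun y hy => ?_⟩
  set d : ℝ := 1 / (2 * (1 + y)) with hd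
  have hdp : 0 < d := by positivity
  have hyd : y * d ≤ 1 := by
    rw [hd, mul_one_div, div_le_one (by positivity)]
    linarith
  have hd2 : d ≤ 1 / 2 := by
    rw [hd]
    apply one_div_le_one_div_of_le <;> linarith
  have hI := aux_int01 m n y hm hn
  have h1 : (∫ u in (0 : ℝ)..d, u ^ (m - 1) * (1 - u) ^ (n - 1) * Real.exp (-(y * u))) ≤
      ∫ u in (0 : ℝ)..1, u ^ (m - 1) * (1 - u) ^ (n - 1) * Real.exp (-(y * u)) := by
    apply intervalIntegral.integral_mono_interval le_rfl hdp.le (by linarith) _ hI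
    refine (ae_restrict_iff' measurableSet_Ioc).2 (Filter.Eventually.of_forall fun x hx => ?_)
    have := hx.1
    have : 0 ≤ 1 - x := by linarith [hx.2]
    simp only [Pi.zero_apply]
    positivity
  refine le_trans ?_ h1
  have h2 : (∫ u in (0 : ℝ)..d, K * u ^ (m - 1)) ≤
      ∫ u in (0 : ℝ)..d, u ^ (m - 1) * (1 - u) ^ (n - 1) * Real.exp (-(y * u)) := by
    apply intervalIntegral.integral_mono_on_of_le_Ioo hdp.le
    · exact (intervalIntegral.intervalIntegrable_rpow' (by linarith)).const_mul _
    · apply hI.mono_set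
      rw [Set.uIcc_of_le hdp.le, Set.uIcc_of_le zero_le_one]
      exact Set.Icc_subset_Icc le_rfl (by linarith)
    · intro u hu
      obtain ⟨hu0, hu1⟩ := hu
      have h3 := (aux_half (n - 1) (1 - u) (by linarith) (by linarith)).1
      have h4 : Real.exp (-1) ≤ Real.exp (-(y * u)) := by
        apply Real.exp_le_exp.2
        nlinarith
      have h5 : 0 < 1 - u := by linarith
      calc K * u ^ (m - 1) = u ^ (m - 1) * min 1 ((1 / 2 : ℝ) ^ (n - 1)) * Real.exp (-1) := by
            rw [hK]
            ring
        _ ≤ _ := by gcongr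
  refine le_trans (le_of_eq ?_) h2
  rw [intervalIntegral.integral_const_mul, integral_rpow (Or.inl (by linarith))]
  have e1 : m - 1 + 1 = m := by ring
  rw [e1, Real.zero_rpow hm.ne', sub_zero, hd, one_div, Real.inv_rpow (by positivity),
    Real.mul_rpow (by norm_num) (by linarith), Real.rpow_neg (by norm_num),
    Real.rpow_neg (by linarith)]
  field_simp

theorem aux_H (m n : ℝ) (hm : 0 < m) (hn : 0 < n) :
    ∃ C : ℝ, 0 < C ∧ ∀ A B c : ℝ, A < B → 0 ≤ c →
      C⁻¹ * ((B - A) ^ (m + n - 1) * Real.exp (c * B) * (1 + c * (B - A)) ^ (-m)) ≤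
        (∫ x in A..B, (B - x) ^ (m - 1) * (x - A) ^ (n - 1) * Real.exp (c * x)) ∧
      (∫ x in A..B, (B - x) ^ (m - 1) * (x - A) ^ (n - 1) * Real.exp (c * x)) ≤
        C * ((B - A) ^ (m + n - 1) * Real.exp (c * B) * (1 + c * (B - A)) ^ (-m)) := by
  obtain ⟨C1, hC1, h1⟩ := aux_upper01 m n hm hn
  obtain ⟨c2, hc2, h2⟩ := aux_lower01 m n hm hn
  refine ⟨C1 + c2⁻¹, by positivity, fun A B c hAB hc => ?_⟩
  set L := B - A with hL
  have hLp : 0 < L := by linarith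
  have hy : 0 ≤ c * L := by positivity
  have e0 := intervalIntegral.integral_comp_sub_mul (a := 0) (b := 1)
    (fun x => (B - x) ^ (m - 1) * (x - A) ^ (n - 1) * Real.exp (c * x)) hLp.ne' B
  have e1 : (∫ x in A..B, (B - x) ^ (m - 1) * (x - A) ^ (n - 1) * Real.exp (c * x)) =
      L ^ (m + n - 1) * Real.exp (c * B) *
      ∫ u in (0 : ℝ)..1, u ^ (m - 1) * (1 - u) ^ (n - 1) * Real.exp (-(c * L * u)) := by
    have e2 : (∫ x in A..B, (B - x) ^ (m - 1) * (x - A) ^ (n - 1) * Real.exp (c * x)) =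
      L * ∫ (x : ℝ) in (0 : ℝ)..1, (fun x => (B - x) ^ (m - 1) * (x - A) ^ (n - 1)
        * Real.exp (c * x)) (B - L * x) := by
      rw [e0, smul_eq_mul, ← mul_assoc, mul_inv_cancel₀ hLp.ne', one_mul]
      congr 1 <;> rw [hL] <;> ring
    rw [e2, ← intervalIntegral.integral_const_mul, ← intervalIntegral.integral_const_mul]
    apply intervalIntegral.integral_congr
    intro u hu
    rw [Set.uIcc_of_le zero_le_one] at hu
    have hu0 := hu.1
    have hu1 : 0 ≤ 1 - u := by linarith [hu.2]
    have a1 : B - (B - L * u) = L * u := by ring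
    have a2 : B - L * u - A = L * (1 - u) := by rw [hL]; ring
    have a3 : c * (B - L * u) = c * B + -(c * L * u) := by ring
    have a4 : L ^ (m + n - 1) = L * L ^ (m - 1) * L ^ (n - 1) := by
      rw [show m + n - 1 = 1 + (m - 1) + (n - 1) by ring, Real.rpow_add hLp, Real.rpow_add hLp,
        Real.rpow_one]
    simp only [a1, a2, a3]
    rw [a4, Real.exp_add, Real.mul_rpow hLp.le hu0, Real.mul_rpow hLp.le hu1]
    ring
  have hP : 0 < L ^ (m + n - 1) * Real.exp (c * B) := by positivity
  have hQ : 0 < (1 + c * L) ^ (-m) := by positivity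
  have hb1 := h1 _ hy
  have hb2 := h2 _ hy
  rw [e1]
  have hcc : (C1 + c2⁻¹)⁻¹ ≤ c2 := by
    rw [inv_le_comm₀ (by positivity) hc2]
    linarith
  have hcd : C1 ≤ C1 + c2⁻¹ := by
    have : 0 < c2⁻¹ := by positivity
    linarith
  constructor
  · calc _ = L ^ (m + n - 1) * Real.exp (c * B) * ((C1 + c2⁻¹)⁻¹ * (1 + c * L) ^ (-m)) := by ring
      _ ≤ L ^ (m + n - 1) * Real.exp (c * B) * (c2 * (1 + c * L) ^ (-m)) := by gcongr
      _ ≤ _ := by gcongr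
  · calc _ ≤ L ^ (m + n - 1) * Real.exp (c * B) * (C1 * (1 + c * L) ^ (-m)) := by gcongr
      _ ≤ L ^ (m + n - 1) * Real.exp (c * B) * ((C1 + c2⁻¹) * (1 + c * L) ^ (-m)) := by gcongr
      _ = _ := by ring

theorem aux_refl (m n A B c : ℝ) :
    (∫ x in A..B, (x - A) ^ (m - 1) * (B - x) ^ (n - 1) * Real.exp (-(c * x))) =
    ∫ x in (-B)..(-A), (-A - x) ^ (m - 1) * (x - -B) ^ (n - 1) * Real.exp (c * x) := by
  rw [← intervalIntegral.integral_comp_neg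
    (fun x => (-A - x) ^ (m - 1) * (x - -B) ^ (n - 1) * Real.exp (c * x))]
  congr 1
  ext x
  have a1 : -A - -x = x - A := by ring
  have a2 : -x - -B = B - x := by ring
  have a3 : c * -x = -(c * x) := by ring
  simp only [a1, a2, a3]

theorem aux_int' (m n c A B : ℝ) (hm : 0 < m) (hn : 0 < n) (hAB : A < B) :
    IntervalIntegrable (fun x => (x - A) ^ (m - 1) * (B - x) ^ (n - 1) * Real.exp (-(c * x)))
      volume A B := by
  refine (aux_int n m (-c) A B hn hm hAB).congr ?_
  intro x _
  simp only [neg_mul]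
  ring

theorem aux_H' (m n : ℝ) (hm : 0 < m) (hn : 0 < n) :
    ∃ C : ℝ, 0 < C ∧ ∀ A B c : ℝ, A < B → 0 ≤ c →
      C⁻¹ * ((B - A) ^ (m + n - 1) * Real.exp (-(c * A)) * (1 + c * (B - A)) ^ (-m)) ≤
        (∫ x in A..B, (x - A) ^ (m - 1) * (B - x) ^ (n - 1) * Real.exp (-(c * x))) ∧
      (∫ x in A..B, (x - A) ^ (m - 1) * (B - x) ^ (n - 1) * Real.exp (-(c * x))) ≤
        C * ((B - A) ^ (m + n - 1) * Real.exp (-(c * A)) * (1 + c * (B - A)) ^ (-m)) := by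
  obtain ⟨C, hC, h⟩ := aux_H m n hm hn
  refine ⟨C, hC, fun A B c hAB hc => ?_⟩
  have := h (-B) (-A) c (by linarith) hc
  rw [aux_refl]
  simpa [neg_add_eq_sub] using this

theorem aux_rk1 (k : ℝ) (hk : 0 < k) :
    ∃ C : ℝ, 0 < C ∧ ∀ h v : ℝ, 0 ≤ h → 0 < v →
      C⁻¹ * (Real.exp (h / 2 * v) * (1 + h * v) ^ (-k)) ≤ Erk1 k (h / 2) v ∧
      Erk1 k (h / 2) v ≤ C * (Real.exp (h / 2 * v) * (1 + h * v) ^ (-k)) ∧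
      0 ≤ Erk1 k (-h / 2) v ∧
      Erk1 k (-h / 2) v ≤ C * (Real.exp (h / 2 * v) * (1 + h * v) ^ (-(k + 1))) := by
  obtain ⟨C1, hC1, h1⟩ := aux_H k (k + 1) hk (by linarith)
  obtain ⟨C2, hC2, h2⟩ := aux_H' (k + 1) k (by linarith) hk
  set G : ℝ := Real.Gamma (k + 1/2) / (Real.sqrt Real.pi * Real.Gamma k) with hG
  have hGp : 0 < G := by
    have := Real.Gamma_pos_of_pos hk
    have := Real.Gamma_pos_of_pos (by linarith : 0 < k + 1 / 2)
    positivity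
  set T : ℝ := (2 : ℝ) ^ (2 * k) with hT
  have hTp : 0 < T := by positivity
  refine ⟨G * C1 * T + G * C2 * T + (G * C1⁻¹ * T)⁻¹, by positivity, fun h v hh hv => ?_⟩
  set C := G * C1 * T + G * C2 * T + (G * C1⁻¹ * T)⁻¹ with hC
  have hCp : 0 < C := by positivity
  have e1 : G * C1 * T ≤ C := by
    have : 0 < G * C2 * T := by positivity
    have : 0 < (G * C1⁻¹ * T)⁻¹ := by positivity
    linarith
  have e2 : G * C2 * T ≤ C := by
    have : 0 < G * C1 * T := by positivity
    have : 0 < (G * C1⁻¹ * T)⁻¹ := by positivity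
    linarith
  have e3 : C⁻¹ ≤ G * C1⁻¹ * T := by
    rw [inv_le_comm₀ hCp (by positivity)]
    have : 0 < G * C1 * T := by positivity
    have : 0 < G * C2 * T := by positivity
    linarith
  have hc : 0 ≤ h / 2 * v := by positivity
  have b1 := h1 (-1) 1 (h / 2 * v) (by norm_num) hc
  have b2 := h2 (-1) 1 (h / 2 * v) (by norm_num) hc
  have E1 : Erk1 k (h / 2) v = G * ∫ x in (-1 : ℝ)..1, (1 - x) ^ (k - 1) * (x - -1) ^ (k + 1 - 1)
      * Real.exp (h / 2 * v * x) := by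
    unfold Erk1
    rw [← hG]
    congr 1
    apply intervalIntegral.integral_congr
    intro x _
    have a1 : x - -1 = 1 + x := by ring
    have a2 : k + 1 - 1 = k := by ring
    have a3 : h / 2 * v * x = x * (h / 2) * v := by ring
    simp only [a1, a2, a3]
    ring
  have E2 : Erk1 k (-h / 2) v = G * ∫ x in (-1 : ℝ)..1, (x - -1) ^ (k + 1 - 1) * (1 - x) ^ (k - 1)
      * Real.exp (-(h / 2 * v * x)) := by
    unfold Erk1
    rw [← hG]
    congr 1
    apply intervalIntegral.integral_congr
    intro x _
    have a1 : x - -1 = 1 + x := by ring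
    have a2 : k + 1 - 1 = k := by ring
    have a3 : -(h / 2 * v * x) = x * (-h / 2) * v := by ring
    simp only [a1, a2, a3]
    ring
  have r1 : (1 : ℝ) - -1 = 2 := by norm_num
  have r2 : k + (k + 1) - 1 = 2 * k := by ring
  have r3 : k + 1 + k - 1 = 2 * k := by ring
  have r4 : 1 + h / 2 * v * 2 = 1 + h * v := by ring
  have r5 : -(h / 2 * v * -1) = h / 2 * v := by ring
  rw [r1, r2, r4, mul_one, ← hT] at b1
  rw [r1, r3, r4, r5, ← hT] at b2
  set P := Real.exp (h / 2 * v) with hP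
  have hPp : 0 < P := by positivity
  have hY : 0 < (1 + h * v) ^ (-k) := by positivity
  have hY' : 0 < (1 + h * v) ^ (-(k + 1)) := by positivity
  rw [E1, E2]
  refine ⟨?_, ?_, ?_, ?_⟩
  · calc _ ≤ G * C1⁻¹ * T * (P * (1 + h * v) ^ (-k)) := by gcongr
      _ = G * (C1⁻¹ * (T * P * (1 + h * v) ^ (-k))) := by ring
      _ ≤ _ := by gcongr; exact b1.1
  · calc _ ≤ G * (C1 * (T * P * (1 + h * v) ^ (-k))) := by gcongr; exact b1.2
      _ = G * C1 * T * (P * (1 + h * v) ^ (-k)) := by ring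
      _ ≤ _ := by gcongr
  · refine mul_nonneg hGp.le (le_trans ?_ b2.1)
    positivity
  · calc _ ≤ G * (C2 * (T * P * (1 + h * v) ^ (-(k + 1)))) := by gcongr; exact b2.2
      _ = G * C2 * T * (P * (1 + h * v) ^ (-(k + 1))) := by ring
      _ ≤ _ := by gcongr

theorem aux_T1 (k s u t P Q w D : ℝ) (hs : 0 < s) (hu : 0 < u) (ht : 0 < t)
    (hP : 0 < P) (hQ : 0 < Q) (hw : 0 < w) (hD : 0 < D) :
    s * P * D ^ (-k) * (Q * w) * (u * P * s * t * Q * w) ^ (k - 1)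
      = (s * P * Q / D) ^ k * w ^ k * u ^ (k - 1) * t ^ (k - 1) := by
  have e : ∀ x : ℝ, 0 < x → x ^ (k - 1) = x ^ k / x := fun x hx => Real.rpow_sub_one hx.ne' k
  rw [e _ (by positivity), e u hu, e t ht, Real.rpow_neg hD.le,
    Real.div_rpow (by positivity) hD.le]
  repeat rw [Real.mul_rpow (by positivity) (by positivity)]
  field_simp

theorem aux_T2 (k s u t P Q w D : ℝ) (hs : 0 < s) (hu : 0 < u) (ht : 0 < t)
    (hP : 0 < P) (hQ : 0 < Q) (hw : 0 < w) (hD : 0 < D) :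
    u * t * D ^ (-(k + 1)) * (Q * w) * (u * P * s * t * Q * w) ^ (k - 1)
      = (t * Q / D) ^ k * D⁻¹ * w ^ k * u ^ k * s ^ (k - 1) * P ^ (k - 1) := by
  have e : ∀ x : ℝ, 0 < x → x ^ (k - 1) = x ^ k / x := fun x hx => Real.rpow_sub_one hx.ne' k
  rw [e _ (by positivity), e s hs, e P hP, Real.rpow_neg hD.le, Real.rpow_add_one hD.ne',
    Real.div_rpow (by positivity) hD.le]
  repeat rw [Real.mul_rpow (by positivity) (by positivity)]
  field_simp

theorem aux_P (k p q t : ℝ) (hk : 0 < k) (hp : 0 < p) (ht : 0 < t) (htq : t ≤ q) :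
    (p + t) ^ (k - 1) ≤ ((p + q) / q) ^ k * (t ^ (k - 1) + q ^ (k - 1)) := by
  have hq : 0 < q := by linarith
  have e : ∀ x : ℝ, 0 < x → x ^ (k - 1) = x ^ k / x := fun x hx => Real.rpow_sub_one hx.ne' k
  have hr : 1 ≤ (p + q) / q := by
    rw [le_div_iff₀ hq]
    linarith
  have hR : 0 < ((p + q) / q) ^ k := by positivity
  have ht1 : 0 < t ^ (k - 1) := by positivity
  have hq1 : 0 < q ^ (k - 1) := by positivity
  rcases le_total 1 k with h | h
  · have h1 : (p + t) ^ (k - 1) ≤ (p + q) ^ (k - 1) :=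
      Real.rpow_le_rpow (by linarith) (by linarith) (by linarith)
    have h2 : (p + q) ^ (k - 1) ≤ ((p + q) / q) ^ k * q ^ (k - 1) := by
      rw [e _ (by linarith), e q hq, Real.div_rpow (by linarith) hq.le]
      have : (p + q) ^ k / q ^ k * (q ^ k / q) = (p + q) ^ k / q := by field_simp
      rw [this]
      apply div_le_div_of_nonneg_left (by positivity) hq (by linarith)
    nlinarith [mul_pos hR ht1]
  · have h1 : (p + t) ^ (k - 1) ≤ t ^ (k - 1) :=
      Real.rpow_le_rpow_of_nonpos ht (by linarith) (by linarith)
    have h2 : 1 ≤ ((p + q) / q) ^ k := Real.one_le_rpow hr hk.le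
    nlinarith [mul_pos hR hq1]

theorem aux_pw_upper (k s u t w h : ℝ) (hk : 0 < k) (hs : 0 < s) (hu : 0 < u) (ht : 0 < t)
    (hw : 0 < w) (hh : 0 ≤ h) :
    (s * (s + u + t) * (1 + h * (s + t)) ^ (-k) + u * t * (1 + h * (s + t)) ^ (-(k + 1)))
      * ((s + t + w) * w) * (u * (s + u + t) * s * t * (s + t + w) * w) ^ (k - 1) ≤
    2 ^ k * ((1 + h * (s + u + t + w)) ^ (-k) * ((s + u + t + w) ^ k * (s + u + t + w) ^ k)) *
      ((w ^ k * (t ^ (k - 1) + (t + w) ^ (k - 1))) *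
        ((s + u) ^ k * u ^ (k - 1) + u ^ k * s ^ (k - 1))) := by
  set D := 1 + h * (s + t) with hD
  set D0 := 1 + h * (s + u + t + w) with hD0
  have hDp : 0 < D := by positivity
  have hD0p : 0 < D0 := by positivity
  have hD1 : 1 ≤ D := by
    have : 0 ≤ h * (s + t) := by positivity
    linarith
  have key : (s + t) * D0 ≤ (s + u + t + w) * D := by
    rw [hD, hD0]
    nlinarith
  have k1 : s * (s + u + t) * (s + t + w) / D ≤
      2 * (s + u) * (s + u + t + w) * (s + u + t + w) / D0 := by
    rw [div_le_div_iff₀ hDp hD0p]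
    have i1 : s * (s + u + t) * (s + t + w) ≤ 2 * (s + u) * (s + u + t + w) * (s + t) := by
      have z : 2 * (s + u) * (s + u + t + w) * (s + t) - s * (s + u + t) * (s + t + w) =
        s^3 + 2*s^2*t + s^2*w + s*t^2 + s*t*w + 3*s^2*u + 5*s*t*u + s*u*w + 2*s*u^2
        + 2*t*u*w + 2*t^2*u + 2*t*u^2 := by ring
      have z2 : 0 ≤ s^3 + 2*s^2*t + s^2*w + s*t^2 + s*t*w + 3*s^2*u + 5*s*t*u + s*u*w + 2*s*u^2
        + 2*t*u*w + 2*t^2*u + 2*t*u^2 := by positivity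
      linarith
    calc s * (s + u + t) * (s + t + w) * D0
        ≤ 2 * (s + u) * (s + u + t + w) * (s + t) * D0 := by gcongr
      _ = 2 * (s + u) * (s + u + t + w) * ((s + t) * D0) := by ring
      _ ≤ 2 * (s + u) * (s + u + t + w) * ((s + u + t + w) * D) := by gcongr
      _ = _ := by ring
  have k2 : t * (s + t + w) / D ≤ (t + w) * (s + u + t + w) / D0 := by
    rw [div_le_div_iff₀ hDp hD0p]
    calc t * (s + t + w) * D0 ≤ (t + w) * (s + t) * D0 := by
          have : t * (s + t + w) ≤ (t + w) * (s + t) := by nlinarith [mul_pos hs hw]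
          gcongr
      _ = (t + w) * ((s + t) * D0) := by ring
      _ ≤ (t + w) * ((s + u + t + w) * D) := by gcongr
      _ = _ := by ring
  set M := D0 ^ (-k) * ((s + u + t + w) ^ k * (s + u + t + w) ^ k) with hM
  have hMp : 0 < M := by positivity
  have T1 : s * (s + u + t) * D ^ (-k) * ((s + t + w) * w)
      * (u * (s + u + t) * s * t * (s + t + w) * w) ^ (k - 1) ≤
      2 ^ k * M * (w ^ k * t ^ (k - 1) * ((s + u) ^ k * u ^ (k - 1))) := by
    rw [aux_T1 k s u t _ _ w D hs hu ht (by positivity) (by positivity) hw hDp]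
    calc _ ≤ (2 * (s + u) * (s + u + t + w) * (s + u + t + w) / D0) ^ k * w ^ k * u ^ (k - 1)
          * t ^ (k - 1) := by
          have := Real.rpow_le_rpow (by positivity) k1 hk.le
          gcongr
      _ = _ := by
          rw [hM, Real.div_rpow (by positivity) hD0p.le, Real.rpow_neg hD0p.le]
          repeat rw [Real.mul_rpow (by positivity) (by positivity)]
          ring
  have T2 : u * t * D ^ (-(k + 1)) * ((s + t + w) * w)
      * (u * (s + u + t) * s * t * (s + t + w) * w) ^ (k - 1) ≤
      M * (w ^ k * (t ^ (k - 1) + (t + w) ^ (k - 1)) * (u ^ k * s ^ (k - 1))) := by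
    rw [aux_T2 k s u t _ _ w D hs hu ht (by positivity) (by positivity) hw hDp]
    have hP := aux_P k (s + u) (t + w) t hk (by positivity) ht (by linarith)
    calc _ ≤ ((t + w) * (s + u + t + w) / D0) ^ k * 1 * w ^ k * u ^ k * s ^ (k - 1) *
          (((s + u + (t + w)) / (t + w)) ^ k * (t ^ (k - 1) + (t + w) ^ (k - 1))) := by
          have := Real.rpow_le_rpow (by positivity) k2 hk.le
          have := inv_le_one_of_one_le₀ hD1
          gcongr
      _ = _ := by
          rw [hM, Real.div_rpow (by positivity) hD0p.le, Real.rpow_neg hD0p.le,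
            Real.div_rpow (by positivity) (by positivity), ← add_assoc,
            Real.mul_rpow (by positivity) (by positivity)]
          field_simp
  have h2 : (1 : ℝ) ≤ 2 ^ k := Real.one_le_rpow (by norm_num) hk.le
  have T1' : 2 ^ k * M * (w ^ k * t ^ (k - 1) * ((s + u) ^ k * u ^ (k - 1))) ≤
      2 ^ k * M * (w ^ k * (t ^ (k - 1) + (t + w) ^ (k - 1)) * ((s + u) ^ k * u ^ (k - 1))) := by
    have : 0 < (t + w) ^ (k - 1) := by positivity
    gcongr
    linarith
  have T2' : M * (w ^ k * (t ^ (k - 1) + (t + w) ^ (k - 1)) * (u ^ k * s ^ (k - 1))) ≤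
      2 ^ k * M * (w ^ k * (t ^ (k - 1) + (t + w) ^ (k - 1)) * (u ^ k * s ^ (k - 1))) := by
    have : M ≤ 2 ^ k * M := by nlinarith
    gcongr
  calc _ = _ + _ := by rw [add_mul, add_mul]
    _ ≤ _ := add_le_add (T1.trans T1') (T2.trans T2')
    _ = _ := by ring

theorem aux_pw_lower (k s u t w h : ℝ) (hk : 0 < k) (hs : 0 < s) (hu : 0 < u) (ht : 0 < t)
    (hw : 0 < w) (hh : 0 ≤ h) :
    ((1 + h * (s + u + t + w)) ^ (-k) * ((s + u + t + w) ^ k * (s + u + t + w) ^ k)) *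
      ((s + u) ^ (-k) * (t + w) ^ (-k)) *
      ((w ^ k * t ^ (2 * k - 1)) * (u ^ (k - 1) * s ^ (2 * k))) ≤
    s * (s + u + t) * (1 + h * (s + t)) ^ (-k)
      * ((s + t + w) * w) * (u * (s + u + t) * s * t * (s + t + w) * w) ^ (k - 1) := by
  set D := 1 + h * (s + t) with hD
  set D0 := 1 + h * (s + u + t + w) with hD0
  have hDp : 0 < D := by positivity
  have hD0p : 0 < D0 := by positivity
  have hDD : D ≤ D0 := by
    rw [hD, hD0]
    have : s + t ≤ s + u + t + w := by linarith
    gcongr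
  rw [aux_T1 k s u t _ _ w D hs hu ht (by positivity) (by positivity) hw hDp]
  have k1 : s * ((s + u + t + w) * t / (t + w)) * ((s + u + t + w) * s / (s + u)) / D0
      ≤ s * (s + u + t) * (s + t + w) / D := by
    have i1 : (s + u + t + w) * t / (t + w) ≤ s + u + t := by
      rw [div_le_iff₀ (by positivity)]
      nlinarith [mul_pos hs hw, mul_pos hu hw]
    have i2 : (s + u + t + w) * s / (s + u) ≤ s + t + w := by
      rw [div_le_iff₀ (by positivity)]
      nlinarith [mul_pos ht hu, mul_pos hu hw]
    gcongr
  have k2 := Real.rpow_le_rpow (by positivity) k1 hk.le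
  refine le_trans (le_of_eq ?_) (mul_le_mul_of_nonneg_right (mul_le_mul_of_nonneg_right
    (mul_le_mul_of_nonneg_right k2 (by positivity : 0 ≤ w ^ k)) (by positivity : 0 ≤ u ^ (k - 1)))
    (by positivity : 0 ≤ t ^ (k - 1)))
  have e1 : t ^ (2 * k - 1) = t ^ k * t ^ (k - 1) := by
    rw [← Real.rpow_add ht]
    congr 1
    ring
  have e2 : s ^ (2 * k) = s ^ k * s ^ k := by
    rw [← Real.rpow_add hs]
    congr 1
    ring
  rw [e1, e2, Real.div_rpow (by positivity) hD0p.le, Real.mul_rpow (by positivity) (by positivity),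
    Real.mul_rpow (by positivity) (by positivity), Real.div_rpow (by positivity) (by positivity),
    Real.div_rpow (by positivity) (by positivity), Real.mul_rpow (by positivity) (by positivity),
    Real.mul_rpow (by positivity) (by positivity), Real.rpow_neg (by positivity),
    Real.rpow_neg (by positivity), Real.rpow_neg (by positivity)]
  field_simp

theorem aux_Emeas (k x : ℝ) : Measurable (fun v => Erk1 k x v) := by
  unfold Erk1
  apply Measurable.const_mul
  have : (fun v => ∫ z in (-1 : ℝ)..1, Real.exp (z * x * v) * (1 - z) ^ (k - 1) * (1 + z) ^ k)
      = fun v => ∫ z in Set.Ioc (-1 : ℝ) 1,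
        Real.exp (z * x * v) * (1 - z) ^ (k - 1) * (1 + z) ^ k := by
    ext v
    rw [intervalIntegral.integral_of_le (by norm_num)]
  rw [this]
  apply StronglyMeasurable.measurable
  apply StronglyMeasurable.integral_prod_right
  apply Measurable.stronglyMeasurable
  unfold Function.uncurry
  fun_prop

theorem aux_2d (F : ℝ → ℝ → ℝ) (hF : Measurable (Function.uncurry F)) (f g f' g' : ℝ → ℝ)
    (A B A' B' : ℝ) (hAB : A < B) (hAB' : A' < B')
    (hf : IntervalIntegrable f volume A B) (hf' : IntervalIntegrable f' volume A B)
    (hg : IntervalIntegrable g volume A' B') (hg' : IntervalIntegrable g' volume A' B')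
    (h : ∀ y ∈ Set.Ioo A' B', ∀ x ∈ Set.Ioo A B,
      0 ≤ F y x ∧ g' y * f' x ≤ F y x ∧ F y x ≤ g y * f x) :
    (∫ y in A'..B', g' y) * (∫ x in A..B, f' x) ≤ (∫ y in A'..B', ∫ x in A..B, F y x) ∧
    (∫ y in A'..B', ∫ x in A..B, F y x) ≤ (∫ y in A'..B', g y) * (∫ x in A..B, f x) := by
  have hin : ∀ y ∈ Set.Ioo A' B', IntervalIntegrable (F y) volume A B := by
    intro y hy
    apply aux_dom hAB _ (hf.const_mul (g y)) (fun x hx => ⟨(h y hy x hx).1, (h y hy x hx).2.2⟩)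
    exact hF.comp (measurable_const.prodMk measurable_id)
  have hmeas : Measurable (fun y => ∫ x in A..B, F y x) := by
    have : (fun y => ∫ x in A..B, F y x) = fun y => ∫ x in Set.Ioc A B, F y x := by
      ext v
      rw [intervalIntegral.integral_of_le hAB.le]
    rw [this]
    exact (StronglyMeasurable.integral_prod_right hF.stronglyMeasurable).measurable
  have b0 : ∀ y ∈ Set.Ioo A' B', 0 ≤ ∫ x in A..B, F y x := by
    intro y hy
    have := intervalIntegral.integral_mono_on_of_le_Ioo hAB.le
      (intervalIntegrable_const (c := (0 : ℝ)) (μ := volume)) (hin y hy)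
      (fun x hx => (h y hy x hx).1)
    simpa using this
  have b1 : ∀ y ∈ Set.Ioo A' B', g' y * (∫ x in A..B, f' x) ≤ ∫ x in A..B, F y x := by
    intro y hy
    rw [← intervalIntegral.integral_const_mul]
    exact intervalIntegral.integral_mono_on_of_le_Ioo hAB.le (hf'.const_mul _) (hin y hy)
      (fun x hx => (h y hy x hx).2.1)
  have b2 : ∀ y ∈ Set.Ioo A' B', (∫ x in A..B, F y x) ≤ g y * (∫ x in A..B, f x) := by
    intro y hy
    rw [← intervalIntegral.integral_const_mul]
    exact intervalIntegral.integral_mono_on_of_le_Ioo hAB.le (hin y hy) (hf.const_mul _)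
      (fun x hx => (h y hy x hx).2.2)
  have hout : IntervalIntegrable (fun y => ∫ x in A..B, F y x) volume A' B' :=
    aux_dom hAB' hmeas (hg.mul_const _) (fun y hy => ⟨b0 y hy, b2 y hy⟩)
  rw [← intervalIntegral.integral_mul_const, ← intervalIntegral.integral_mul_const]
  exact ⟨intervalIntegral.integral_mono_on_of_le_Ioo hAB'.le (hg'.mul_const _) hout b1,
    intervalIntegral.integral_mono_on_of_le_Ioo hAB'.le hout (hg.mul_const _) b2⟩

/-- upper one-dimensional majorant in the first variable -/
theorem aux_fint (k : ℝ) (hk : 0 < k) : ∃ C : ℝ, 0 < C ∧ ∀ A B a : ℝ, A < B → 0 ≤ a →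
    IntervalIntegrable (fun x => ((B - A) ^ k * (B - x) ^ (k - 1)
      + (B - x) ^ k * (x - A) ^ (k - 1)) * Real.exp (a * x)) volume A B ∧
    (∫ x in A..B, ((B - A) ^ k * (B - x) ^ (k - 1)
      + (B - x) ^ k * (x - A) ^ (k - 1)) * Real.exp (a * x)) ≤
      C * ((B - A) ^ k * (B - A) ^ k * Real.exp (a * B) / (1 + (B - A) * a) ^ k) := by
  obtain ⟨C1, hC1, h1⟩ := aux_H k 1 hk one_pos
  obtain ⟨C2, hC2, h2⟩ := aux_H (k + 1) k (by linarith) hk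
  refine ⟨C1 + C2, by positivity, fun A B a hAB ha => ?_⟩
  have i1 := (aux_int k 1 a A B hk one_pos hAB).const_mul ((B - A) ^ k)
  have i2 := aux_int (k + 1) k a A B (by linarith) hk hAB
  have hL : 0 < B - A := by linarith
  have e : (fun x => ((B - A) ^ k * (B - x) ^ (k - 1)
      + (B - x) ^ k * (x - A) ^ (k - 1)) * Real.exp (a * x)) =
      fun x => (B - A) ^ k * ((B - x) ^ (k - 1) * (x - A) ^ ((1 : ℝ) - 1) * Real.exp (a * x))
        + (B - x) ^ (k + 1 - 1) * (x - A) ^ (k - 1) * Real.exp (a * x) := by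
    ext x
    rw [sub_self, Real.rpow_zero, add_sub_cancel_right]
    ring
  rw [e]
  refine ⟨i1.add i2, ?_⟩
  rw [intervalIntegral.integral_add i1 i2, intervalIntegral.integral_const_mul]
  have b1 := (h1 A B a hAB ha).2
  have b2 := (h2 A B a hAB ha).2
  have hYp : 1 ≤ 1 + a * (B - A) := by
    have : 0 ≤ a * (B - A) := by positivity
    linarith
  have hY : (1 + a * (B - A)) ^ (-(k + 1)) ≤ (1 + a * (B - A)) ^ (-k) :=
    Real.rpow_le_rpow_of_exponent_le hYp (by linarith)
  have r1 : k + 1 - 1 = k := by ring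
  have r2 : k + 1 + k - 1 = k + k := by ring
  rw [r1] at b1
  rw [r2, Real.rpow_add hL] at b2
  calc _ ≤ (B - A) ^ k * (C1 * ((B - A) ^ k * Real.exp (a * B) * (1 + a * (B - A)) ^ (-k)))
      + C2 * ((B - A) ^ k * (B - A) ^ k * Real.exp (a * B) * (1 + a * (B - A)) ^ (-(k + 1))) := by
        gcongr
    _ ≤ (B - A) ^ k * (C1 * ((B - A) ^ k * Real.exp (a * B) * (1 + a * (B - A)) ^ (-k)))
      + C2 * ((B - A) ^ k * (B - A) ^ k * Real.exp (a * B) * (1 + a * (B - A)) ^ (-k)) := by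
        gcongr
    _ = _ := by
        rw [Real.rpow_neg (by linarith), mul_comm a (B - A)]
        ring

theorem aux_gint (k : ℝ) (hk : 0 < k) : ∃ C : ℝ, 0 < C ∧ ∀ A B b : ℝ, A < B → 0 ≤ b →
    IntervalIntegrable (fun x => ((x - A) ^ k * ((B - x) ^ (k - 1) + (B - A) ^ (k - 1)))
      * Real.exp (-(b * x))) volume A B ∧
    (∫ x in A..B, ((x - A) ^ k * ((B - x) ^ (k - 1) + (B - A) ^ (k - 1)))
      * Real.exp (-(b * x))) ≤
      C * ((B - A) ^ k * (B - A) ^ k * Real.exp (-(b * A)) / (1 + (B - A) * b) ^ (k + 1)) := by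
  obtain ⟨C1, hC1, h1⟩ := aux_H' (k + 1) 1 (by linarith) one_pos
  obtain ⟨C2, hC2, h2⟩ := aux_H' (k + 1) k (by linarith) hk
  refine ⟨C1 + C2, by positivity, fun A B b hAB hb => ?_⟩
  have i1 := (aux_int' (k + 1) 1 b A B (by linarith) one_pos hAB).const_mul ((B - A) ^ (k - 1))
  have i2 := aux_int' (k + 1) k b A B (by linarith) hk hAB
  have hL : 0 < B - A := by linarith
  have e : (fun x => ((x - A) ^ k * ((B - x) ^ (k - 1) + (B - A) ^ (k - 1)))
      * Real.exp (-(b * x))) =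
      fun x => (B - A) ^ (k - 1) *
        ((x - A) ^ (k + 1 - 1) * (B - x) ^ ((1 : ℝ) - 1) * Real.exp (-(b * x)))
        + (x - A) ^ (k + 1 - 1) * (B - x) ^ (k - 1) * Real.exp (-(b * x)) := by
    ext x
    rw [sub_self, Real.rpow_zero, add_sub_cancel_right]
    ring
  rw [e]
  refine ⟨i1.add i2, ?_⟩
  rw [intervalIntegral.integral_add i1 i2, intervalIntegral.integral_const_mul]
  have b1 := (h1 A B b hAB hb).2
  have b2 := (h2 A B b hAB hb).2
  have hYp : 0 < 1 + b * (B - A) := by positivity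
  have r1 : k + 1 + 1 - 1 = k + 1 := by ring
  have r2 : k + 1 + k - 1 = k + k := by ring
  rw [r1, Real.rpow_add_one hL.ne'] at b1
  rw [r2, Real.rpow_add hL] at b2
  calc _ ≤ (B - A) ^ (k - 1) * (C1 * ((B - A) ^ k * (B - A) * Real.exp (-(b * A))
        * (1 + b * (B - A)) ^ (-(k + 1))))
      + C2 * ((B - A) ^ k * (B - A) ^ k * Real.exp (-(b * A))
        * (1 + b * (B - A)) ^ (-(k + 1))) := by
        gcongr
    _ = _ := by
        rw [Real.rpow_neg hYp.le, mul_comm b (B - A), Real.rpow_sub_one hL.ne']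
        field_simp

theorem aux_flow (k : ℝ) (hk : 0 < k) : ∃ C : ℝ, 0 < C ∧ ∀ A B a : ℝ, A < B → 0 ≤ a →
    IntervalIntegrable (fun x => (B - x) ^ (k - 1) * (x - A) ^ (2 * k) * Real.exp (a * x))
      volume A B ∧
    C * ((B - A) ^ k * (B - A) ^ k * (B - A) ^ k * Real.exp (a * B) / (1 + (B - A) * a) ^ k) ≤
    (∫ x in A..B, (B - x) ^ (k - 1) * (x - A) ^ (2 * k) * Real.exp (a * x)) := by
  obtain ⟨C1, hC1, h1⟩ := aux_H k (2 * k + 1) hk (by linarith)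
  refine ⟨C1⁻¹, by positivity, fun A B a hAB ha => ?_⟩
  have i1 := aux_int k (2 * k + 1) a A B hk (by linarith) hAB
  have b1 := (h1 A B a hAB ha).1
  have hL : 0 < B - A := by linarith
  have hYp : 0 < 1 + a * (B - A) := by positivity
  have r1 : 2 * k + 1 - 1 = 2 * k := by ring
  have r2 : k + (2 * k + 1) - 1 = k + k + k := by ring
  rw [r1] at i1 b1
  rw [r2, Real.rpow_add hL, Real.rpow_add hL, Real.rpow_neg hYp.le, mul_comm a (B - A)] at b1
  exact ⟨i1, b1⟩

theorem aux_glow (k : ℝ) (hk : 0 < k) : ∃ C : ℝ, 0 < C ∧ ∀ A B b : ℝ, A < B → 0 ≤ b →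
    IntervalIntegrable (fun x => (x - A) ^ k * (B - x) ^ (2 * k - 1) * Real.exp (-(b * x)))
      volume A B ∧
    C * ((B - A) ^ k * (B - A) ^ k * (B - A) ^ k * Real.exp (-(b * A))
      / (1 + (B - A) * b) ^ (k + 1)) ≤
    (∫ x in A..B, (x - A) ^ k * (B - x) ^ (2 * k - 1) * Real.exp (-(b * x))) := by
  obtain ⟨C1, hC1, h1⟩ := aux_H' (k + 1) (2 * k) (by linarith) (by linarith)
  refine ⟨C1⁻¹, by positivity, fun A B b hAB hb => ?_⟩
  have i1 := aux_int' (k + 1) (2 * k) b A B (by linarith) (by linarith) hAB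
  have b1 := (h1 A B b hAB hb).1
  have hL : 0 < B - A := by linarith
  have hYp : 0 < 1 + b * (B - A) := by positivity
  have r1 : k + 1 - 1 = k := by ring
  have r2 : k + 1 + 2 * k - 1 = k + k + k := by ring
  rw [r1] at i1 b1
  rw [r2, Real.rpow_add hL, Real.rpow_add hL, Real.rpow_neg hYp.le, mul_comm b (B - A)] at b1
  exact ⟨i1, b1⟩

theorem aux_final (k : ℝ) (hk : 0 < k) :
    ∃ c C : ℝ, 0 < c ∧ 0 < C ∧ ∀ l1 l2 l3 x1 x2 x3 : ℝ,
      l1 + l2 + l3 = 0 → l2 < l1 → l3 < l2 → x3 ≤ x1 → x2 ≤ x3 →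
      (c * (Real.exp (l1 * x1 + l2 * x3 + l3 * x2) /
          ((1 + (l1 - l2) * (x1 - x3)) ^ k * (1 + (l2 - l3) * (x3 - x2)) ^ (k + 1)
            * (1 + (l1 - l3) * (x1 - x2)) ^ k))
        ≤ EkA2 k x1 x2 x3 l1 l2 l3 ∧
      EkA2 k x1 x2 x3 l1 l2 l3
        ≤ C * (Real.exp (l1 * x1 + l2 * x3 + l3 * x2) /
          ((1 + (l1 - l2) * (x1 - x3)) ^ k * (1 + (l2 - l3) * (x3 - x2)) ^ (k + 1)
            * (1 + (l1 - l3) * (x1 - x2)) ^ k))) := by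
  obtain ⟨R, hR, hrk⟩ := aux_rk1 k hk
  obtain ⟨C1, hC1, hfu⟩ := aux_fint k hk
  obtain ⟨C2, hC2, hgu⟩ := aux_gint k hk
  obtain ⟨c1, hc1, hfl⟩ := aux_flow k hk
  obtain ⟨c2, hc2, hgl⟩ := aux_glow k hk
  have hG := Real.Gamma_pos_of_pos hk
  have hG3 := Real.Gamma_pos_of_pos (by linarith : 0 < 3 * k)
  set S : ℝ := 3 * Real.Gamma (3 * k) / Real.Gamma k ^ 2 with hS
  have hSp : 0 < S := by positivity
  refine ⟨S * (R⁻¹ * (c1 * c2)), S * (R * 2 ^ k * (C1 * C2)), by positivity, by positivity, ?_⟩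
  intro l1 l2 l3 x1 x2 x3 hl h12 h23 h31 h32
  have ha : 0 ≤ x1 - x3 := by linarith
  have hb : 0 ≤ x3 - x2 := by linarith
  have hh : 0 ≤ x1 - x2 := by linarith
  have hp : 0 < l1 - l2 := by linarith
  have hq : 0 < l2 - l3 := by linarith
  have hpq : 0 < l1 - l3 := by linarith
  obtain ⟨fI, fB⟩ := hfu l2 l1 (x1 - x3) h12 ha
  obtain ⟨gI, gB⟩ := hgu l3 l2 (x3 - x2) h23 hb
  obtain ⟨fI', fB'⟩ := hfl l2 l1 (x1 - x3) h12 ha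
  obtain ⟨gI', gB'⟩ := hgl l3 l2 (x3 - x2) h23 hb
  set M : ℝ := (1 + (x1 - x2) * (l1 - l3)) ^ (-k) * ((l1 - l3) ^ k * (l1 - l3) ^ k) with hM
  have hMp : 0 < M := by positivity
  set N : ℝ := M * ((l1 - l2) ^ (-k) * (l2 - l3) ^ (-k)) with hN
  have hNp : 0 < N := by positivity
  set F : ℝ → ℝ → ℝ := fun n2 n1 =>
      ((n1 - l2) * (l1 - n2) * Erk1 k ((x1 - x2) / 2) (n1 - n2)
        + (l1 - n1) * (l2 - n2) * Erk1 k (-(x1 - x2) / 2) (n1 - n2))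
      * ((n1 - l3) * (n2 - l3)) * Real.exp ((x1 + x2 - 2 * x3) * (n1 + n2) / 2)
      * Wk k l1 l2 l3 n1 n2 with hF
  have hFm : Measurable (Function.uncurry F) := by
    have m1 : Measurable (fun z : ℝ × ℝ => Erk1 k ((x1 - x2) / 2) (z.2 - z.1)) :=
      (aux_Emeas k _).comp (measurable_snd.sub measurable_fst)
    have m2 : Measurable (fun z : ℝ × ℝ => Erk1 k (-(x1 - x2) / 2) (z.2 - z.1)) :=
      (aux_Emeas k _).comp (measurable_snd.sub measurable_fst)
    unfold Function.uncurry
    simp only [hF, Wk]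
    fun_prop
  have main := aux_2d F hFm _
    (fun y => R * (2 ^ k * M) * (((y - l3) ^ k * ((l2 - y) ^ (k - 1) + (l2 - l3) ^ (k - 1)))
      * Real.exp (-((x3 - x2) * y)))) _
    (fun y => R⁻¹ * N * ((y - l3) ^ k * (l2 - y) ^ (2 * k - 1) * Real.exp (-((x3 - x2) * y))))
    l2 l1 l3 l2 h12 h23 fI fI' (gI.const_mul _) (gI'.const_mul _) (by
      intro y hy x hx
      have hs : 0 < x - l2 := by linarith [hx.1]
      have hu : 0 < l1 - x := by linarith [hx.2]
      have ht : 0 < l2 - y := by linarith [hy.2]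
      have hw : 0 < y - l3 := by linarith [hy.1]
      have hv : 0 < x - y := by linarith
      have hP : 0 < l1 - y := by linarith
      have hQ : 0 < x - l3 := by linarith
      obtain ⟨r1, r2, r3, r4⟩ := hrk (x1 - x2) (x - y) hh hv
      have pu := aux_pw_upper k (x - l2) (l1 - x) (l2 - y) (y - l3) (x1 - x2) hk hs hu ht hw hh
      have pl := aux_pw_lower k (x - l2) (l1 - x) (l2 - y) (y - l3) (x1 - x2) hk hs hu ht hw hh
      have s1 : x - l2 + (l1 - x) + (l2 - y) = l1 - y := by ring
      have s2 : x - l2 + (l2 - y) = x - y := by ring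
      have s3 : x - y + (y - l3) = x - l3 := by ring
      have s4 : x - l2 + (l1 - x) = l1 - l2 := by ring
      have s5 : l2 - y + (y - l3) = l2 - l3 := by ring
      have s6 : l1 - y + (y - l3) = l1 - l3 := by ring
      rw [s1, s2, s3, s4, s5, s6] at pu pl
      rw [← hM] at pu pl
      rw [← hN] at pl
      have hWe : (((l1 - x) * (l1 - y) * (x - l2) * (l2 - y) * (x - l3) * (y - l3)) ^ (k - 1))
          = Wk k l1 l2 l3 x y := rfl
      have hWp : 0 < Wk k l1 l2 l3 x y := by
        rw [← hWe]
        positivity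
      rw [hWe] at pu pl
      set W := Wk k l1 l2 l3 x y with hW
      set Dk := (1 + (x1 - x2) * (x - y)) ^ (-k) with hDk
      set Dk1 := (1 + (x1 - x2) * (x - y)) ^ (-(k + 1)) with hDk1
      have hDkp : 0 < Dk := by positivity
      have hDk1p : 0 < Dk1 := by positivity
      set e0 := Real.exp ((x1 + x2 - 2 * x3) * (x + y) / 2) with he0
      set e1 := Real.exp ((x1 - x2) / 2 * (x - y)) with he1
      have he0p : 0 < e0 := by positivity
      have he1p : 0 < e1 := by positivity
      have hexp : e1 * e0 = Real.exp ((x1 - x3) * x) * Real.exp (-((x3 - x2) * y)) := by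
        rw [he0, he1, ← Real.exp_add, ← Real.exp_add]
        congr 1
        ring
      have hE1 : 0 ≤ Erk1 k ((x1 - x2) / 2) (x - y) := le_trans (by positivity) r1
      refine ⟨by simp only [hF]; positivity, ?_, ?_⟩
      · calc _ = R⁻¹ * (e1 * e0) * (N * ((y - l3) ^ k * (l2 - y) ^ (2 * k - 1)
              * ((l1 - x) ^ (k - 1) * (x - l2) ^ (2 * k)))) := by
              rw [hexp]
              ring
          _ ≤ R⁻¹ * (e1 * e0) * ((x - l2) * (l1 - y) * Dk * ((x - l3) * (y - l3)) * W) := by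
              gcongr
          _ = ((x - l2) * (l1 - y) * (R⁻¹ * (e1 * Dk)) + 0) * ((x - l3) * (y - l3)) * e0 * W := by
              ring
          _ ≤ F y x := by
              simp only [hF]
              rw [← hW, ← he0]
              gcongr
              positivity
      · calc F y x ≤ ((x - l2) * (l1 - y) * (R * (e1 * Dk))
              + (l1 - x) * (l2 - y) * (R * (e1 * Dk1))) * ((x - l3) * (y - l3)) * e0 * W := by
              simp only [hF]
              rw [← hW, ← he0]
              gcongr
          _ = R * (e1 * e0) * (((x - l2) * (l1 - y) * Dk + (l1 - x) * (l2 - y) * Dk1)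
              * ((x - l3) * (y - l3)) * W) := by ring
          _ ≤ R * (e1 * e0) * _ := mul_le_mul_of_nonneg_left pu (by positivity)
          _ = _ := by
              rw [hexp]
              ring)
  rw [intervalIntegral.integral_const_mul, intervalIntegral.integral_const_mul] at main
  have hE : EkA2 k x1 x2 x3 l1 l2 l3 =
      S / Vlam l1 l2 l3 ^ (2 * k) * ∫ n2 in l3..l2, ∫ n1 in l2..l1, F n2 n1 := by
    unfold EkA2
    rw [hS]
    congr 1
    field_simp
  have hV : Vlam l1 l2 l3 ^ (2 * k) = (l1 - l2) ^ k * (l1 - l2) ^ k * ((l1 - l3) ^ k * (l1 - l3) ^ k)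
      * ((l2 - l3) ^ k * (l2 - l3) ^ k) := by
    unfold Vlam
    rw [two_mul, Real.rpow_add (by positivity), Real.mul_rpow (by positivity) (by positivity),
      Real.mul_rpow (by positivity) (by positivity)]
    ring
  have hex : Real.exp (l1 * x1 + l2 * x3 + l3 * x2) =
      Real.exp ((x1 - x3) * l1) * Real.exp (-((x3 - x2) * l3)) := by
    rw [← Real.exp_add]
    congr 1
    have : l2 = -l1 - l3 := by linarith
    rw [this]
    ring
  have hSV : 0 < S / Vlam l1 l2 l3 ^ (2 * k) := by
    rw [hV]
    positivity
  rw [hE]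
  have hd1 : 0 < 1 + (l1 - l2) * (x1 - x3) := by positivity
  have hd2 : 0 < 1 + (l2 - l3) * (x3 - x2) := by positivity
  have hd3 : 0 < 1 + (l1 - l3) * (x1 - x2) := by positivity
  constructor
  · refine le_trans (le_of_eq ?_) (mul_le_mul_of_nonneg_left (le_trans
      (mul_le_mul (mul_le_mul_of_nonneg_left gB' (by positivity)) fB' (by positivity)
        (mul_nonneg (by positivity) (le_trans (by positivity) gB'))) main.1) hSV.le)
    rw [hV, hex, hN, hM, mul_comm (x1 - x2) (l1 - l3), Real.rpow_neg hp.le, Real.rpow_neg hq.le,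
      Real.rpow_neg hd3.le]
    field_simp
  · have hf0 : 0 ≤ ∫ x in l2..l1, ((l1 - l2) ^ k * (l1 - x) ^ (k - 1)
      + (l1 - x) ^ k * (x - l2) ^ (k - 1)) * Real.exp ((x1 - x3) * x) := by
      apply intervalIntegral.integral_nonneg h12.le
      intro x hx
      have : 0 ≤ x - l2 := by linarith [hx.1]
      have : 0 ≤ l1 - x := by linarith [hx.2]
      positivity
    refine le_trans (mul_le_mul_of_nonneg_left (le_trans main.2
      (mul_le_mul (mul_le_mul_of_nonneg_left gB (by positivity)) fB hf0 (by positivity)))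
        hSV.le) (le_of_eq ?_)
    rw [hV, hex, hM, mul_comm (x1 - x2) (l1 - l3), Real.rpow_neg hd3.le]
    field_simp

/-- Theorem 4.1: sharp estimate of the `A₂` Dunkl kernel. -/
theorem estimate_C132 (k : ℝ) (hk : 0 < k) :
    ∃ C : ℝ, 0 < C ∧ ∀ l1 l2 l3 x1 x2 x3 : ℝ,
      l1 + l2 + l3 = 0 →
      l2 < l1 →
      l3 < l2 →
      x1 + x2 + x3 = 0 →
      x3 ≤ x1 →
      x2 ≤ x3 →
      (C⁻¹ * (Real.exp (l1 * x1 + l2 * x3 + l3 * x2) /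
          ((1 + (l1 - l2) * (x1 - x3)) ^ k * (1 + (l2 - l3) * (x3 - x2)) ^ (k + 1)
            * (1 + (l1 - l3) * (x1 - x2)) ^ k))
        ≤ EkA2 k x1 x2 x3 l1 l2 l3 ∧
      EkA2 k x1 x2 x3 l1 l2 l3
        ≤ C * (Real.exp (l1 * x1 + l2 * x3 + l3 * x2) /
          ((1 + (l1 - l2) * (x1 - x3)) ^ k * (1 + (l2 - l3) * (x3 - x2)) ^ (k + 1)
            * (1 + (l1 - l3) * (x1 - x2)) ^ k))) := by
  obtain ⟨c, C, hc, hC, h⟩ := aux_final k hk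
  refine ⟨C + c⁻¹, by positivity, ?_⟩
  intro l1 l2 l3 x1 x2 x3 hl h12 h23 _ h31 h32
  obtain ⟨hA, hB⟩ := h l1 l2 l3 x1 x2 x3 hl h12 h23 h31 h32
  have hp : 0 < l1 - l2 := by linarith
  have hq : 0 < l2 - l3 := by linarith
  have hpq : 0 < l1 - l3 := by linarith
  have ha : 0 ≤ x1 - x3 := by linarith
  have hb : 0 ≤ x3 - x2 := by linarith
  have hh : 0 ≤ x1 - x2 := by linarith
  have hcc : (C + c⁻¹)⁻¹ ≤ c := by
    rw [inv_le_comm₀ (by positivity) hc]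
    linarith
  have hcd : C ≤ C + c⁻¹ := by
    have : 0 < c⁻¹ := by positivity
    linarith
  exact ⟨le_trans (mul_le_mul_of_nonneg_right hcc (by positivity)) hA,
    le_trans hB (mul_le_mul_of_nonneg_right hcd (by positivity))⟩
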